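/- Let p ∈ (0,1), let F be a Lévy measure on ℝⁿ satisfying (A_F), let b ∈ ℝⁿ, let c be a symmetric positive semidefinite n×n matrix, and let C ⊆ ℝⁿ be a compact convex set with 0 ∈ C. Define Φ(π) := ⟨π,b⟩ + ((p−1)/2)⟨π,cπ⟩ + ∫ ( p⁻¹((1+⟨π,u⟩)₊)^p − p⁻¹ − ⟨π,u⟩·1_{|u|≤1} ) F(du) for π ∈ C₀. Then: (a) there exists π* ∈ C ∩ C₀ with Φ(π*) ≥ Φ(π) for all π ∈ C ∩ C₀; (b) any two maximizers of Φ over C ∩ C₀ differ by an element of N: if π₁, π₂ ∈ C ∩ C₀ both maximize Φ over C ∩ C₀, then π₁ − π₂ ∈ N. -/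

import Mathlib

open MeasureTheory
open scoped RealInnerProductSpace ENNReal

/-- The objective function `Φ(π) := ⟨π,b⟩ + ((p−1)/2)⟨π,cπ⟩ +
`∫ (p⁻¹((1+⟨π,u⟩)₊)^p − p⁻¹ − ⟨π,u⟩·1_{|u|≤1}) dF`. -/
noncomputable def PhiObj (n : ℕ) (p : ℝ) (F : Measure (EuclideanSpace ℝ (Fin n)))
    (b : EuclideanSpace ℝ (Fin n))
    (c : EuclideanSpace ℝ (Fin n) →ₗ[ℝ] EuclideanSpace ℝ (Fin n))
    (π : EuclideanSpace ℝ (Fin n)) : ℝ :=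
  ⟪π, b⟫ + ((p - 1) / 2) * ⟪π, c π⟫ +
    ∫ u, (p⁻¹ * (max (1 + ⟪π, u⟫) 0) ^ p - p⁻¹ -
      Set.indicator {u : EuclideanSpace ℝ (Fin n) | ‖u‖ ≤ 1}
        (fun u => ⟪π, u⟫) u) ∂F

/-!
Both the drift term and the diffusion term of `Φ` are elementary, so everything rests on the jump
integral. Its integrand is `O(|u|²)` for small jumps, because `x ↦ p⁻¹ (1 + x)₊ ^ p - p⁻¹` is
tangent to the identity at `0`, and `O(|u|^p)` for large jumps, because `x ↦ x ^ p` is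
`p`-Hölder; both bounds are locally uniform in `π`. Hence `Φ` is continuous by dominated
convergence, and it attains its maximum because `C₀` is closed.

For uniqueness, compare two maximizers with their midpoint, where `2 Φ` exceeds the sum of the two
maximal values by `(1 - p) / 4 * ⟪d, c d⟫`, `d` being their difference, plus the midpoint gap of the
concave jump integral. Both summands are nonnegative, hence zero: the first forces `c d = 0`, the
second, by strict concavity of the power utility, `⟪d, u⟫ = 0` for almost every jump `u`. What
remains of the equality of the two values of `Φ` is `⟪d, b⟫ = 0`.
-/

section Midpoint

lemma two_mul_midpoint (a b : ℝ) : 2 * midpoint ℝ a b = a + b := by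
  rw [midpoint_eq_smul_add, smul_eq_mul, mul_invOf_cancel_left']

variable {V : Type*} [AddCommGroup V] [Module ℝ V] {s : Set V} {f : V → ℝ} {x y : V}

lemma concaveOn_add_le_two_mul_midpoint (hf : ConcaveOn ℝ s f) (hx : x ∈ s) (hy : y ∈ s) :
    f x + f y ≤ 2 * f (midpoint ℝ x y) := by
  have h : midpoint ℝ (f x) (f y) ≤ f (midpoint ℝ x y) := by
    simpa only [← smul_add, ← midpoint_eq_smul_add] using
      hf.2 hx hy (by norm_num : (0 : ℝ) ≤ ⅟2) (by norm_num : (0 : ℝ) ≤ ⅟2) (by norm_num)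
  linarith [two_mul_midpoint (f x) (f y)]

lemma strictConcaveOn_add_lt_two_mul_midpoint (hf : StrictConcaveOn ℝ s f) (hx : x ∈ s)
    (hy : y ∈ s) (hxy : x ≠ y) : f x + f y < 2 * f (midpoint ℝ x y) := by
  have h : midpoint ℝ (f x) (f y) < f (midpoint ℝ x y) := by
    simpa only [← smul_add, ← midpoint_eq_smul_add] using
      hf.2 hx hy hxy (by norm_num : (0 : ℝ) < ⅟2) (by norm_num : (0 : ℝ) < ⅟2) (by norm_num)
  linarith [two_mul_midpoint (f x) (f y)]

end Midpoint

section InnerProductSpace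

variable {E : Type*} [NormedAddCommGroup E] [InnerProductSpace ℝ E]

lemma inner_midpoint_left (x y v : E) : ⟪midpoint ℝ x y, v⟫ = midpoint ℝ ⟪x, v⟫ ⟪y, v⟫ := by
  simp only [midpoint_eq_smul_add, real_inner_smul_left, inner_add_left, smul_eq_mul]

lemma map_eq_zero_of_inner_map_self_eq_zero {T : E →ₗ[ℝ] E} (hT : T.IsPositive) {x : E}
    (hx : ⟪x, T x⟫ = 0) : T x = 0 := by
  let B : LinearMap.BilinForm ℝ E := innerₗ E ∘ₗ T
  have hB : LinearMap.IsSymm B := ⟨fun y z => (hT.isSymmetric y z).trans (real_inner_comm _ _)⟩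
  have hker : x ∈ LinearMap.ker B :=
    (B.apply_apply_same_eq_zero_iff hT.inner_nonneg_left hB).1 ((hT.isSymmetric x x).trans hx)
  exact inner_self_eq_zero.1 (LinearMap.congr_fun hker (T x))

lemma inner_map_self_add_inner_map_self (T : E →ₗ[ℝ] E) (x y : E) :
    ⟪x, T x⟫ + ⟪y, T y⟫ =
      2 * ⟪midpoint ℝ x y, T (midpoint ℝ x y)⟫ + ⟪x - y, T (x - y)⟫ / 2 := by
  simp only [midpoint_eq_smul_add, map_add, map_sub, map_smul, inner_add_left, inner_add_right,
    inner_sub_left, inner_sub_right, real_inner_smul_left, real_inner_smul_right, invOf_eq_inv]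
  ring

end InnerProductSpace

section PowerUtility

lemma abs_rpow_sub_rpow_le {a b p : ℝ} (ha : 0 ≤ a) (hb : 0 ≤ b) (hp0 : 0 ≤ p) (hp1 : p ≤ 1) :
    |a ^ p - b ^ p| ≤ |a - b| ^ p := by
  have rpow_le_add {x y : ℝ} (hx : 0 ≤ x) (hy : 0 ≤ y) : x ^ p ≤ y ^ p + |x - y| ^ p :=
    calc x ^ p ≤ (y + |x - y|) ^ p := by
          gcongr
          linarith [le_abs_self (x - y)]
      _ ≤ y ^ p + |x - y| ^ p := Real.rpow_add_le_add_rpow hy (abs_nonneg _) hp0 hp1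
  have hab := rpow_le_add ha hb
  have hba := rpow_le_add hb ha
  rw [abs_sub_comm b a] at hba
  exact abs_sub_le_iff.2 ⟨by linarith, by linarith⟩

/-- The power utility of the wealth `(1 + x)₊` reached from initial wealth `1` with return `x`,
normalised to vanish at `x = 0`. -/
noncomputable def powerUtility (p x : ℝ) : ℝ :=
  p⁻¹ * (max (1 + x) 0) ^ p - p⁻¹

variable {p x : ℝ}

lemma powerUtility_of_neg_one_le (hx : -1 ≤ x) :
    powerUtility p x = p⁻¹ * (1 + x) ^ p - p⁻¹ := by
  rw [powerUtility, max_eq_left (by linarith)]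

lemma continuous_powerUtility (hp0 : 0 < p) : Continuous (powerUtility p) := by
  unfold powerUtility
  exact ((((continuous_const.add continuous_id).max continuous_const).rpow_const
    fun _ => Or.inr hp0.le).const_mul _).sub continuous_const

lemma strictConcaveOn_powerUtility (hp0 : 0 < p) (hp1 : p < 1) :
    StrictConcaveOn ℝ (Set.Ici (-1)) (powerUtility p) := by
  refine ⟨convex_Ici _, fun x hx y hy hxy s t hs ht hst => ?_⟩
  have hmem : -1 ≤ s • x + t • y := convex_Ici (-1 : ℝ) hx hy hs.le ht.le hst
  rw [powerUtility_of_neg_one_le hx, powerUtility_of_neg_one_le hy,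
    powerUtility_of_neg_one_le hmem]
  have hrpow := (Real.strictConcaveOn_rpow hp0 hp1).2
    (Set.mem_Ici.2 <| neg_le_iff_add_nonneg'.1 hx) (Set.mem_Ici.2 <| neg_le_iff_add_nonneg'.1 hy)
    (by simpa using hxy) hs ht hst
  simp only [smul_eq_mul] at hrpow ⊢
  rw [show s * (1 + x) + t * (1 + y) = 1 + (s * x + t * y) by linear_combination hst] at hrpow
  have hscaled := mul_lt_mul_of_pos_left hrpow (inv_pos.2 hp0)
  linear_combination hscaled - p⁻¹ * hst

lemma powerUtility_le_self (hp0 : 0 < p) (hp1 : p ≤ 1) (hx : -1 ≤ x) : powerUtility p x ≤ x := by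
  rw [powerUtility_of_neg_one_le hx]
  have bernoulli := rpow_one_add_le_one_add_mul_self hx hp0.le hp1
  calc p⁻¹ * (1 + x) ^ p - p⁻¹ ≤ p⁻¹ * (1 + p * x) - p⁻¹ := by gcongr
    _ = x := by field_simp; ring

lemma one_sub_inv_le_powerUtility (hp0 : 0 < p) (hx : -1 < x) :
    1 - (1 + x)⁻¹ ≤ powerUtility p x := by
  have hpos : 0 < 1 + x := by linarith
  have hexp : 1 + p * Real.log (1 + x) ≤ (1 + x) ^ p := by
    rw [Real.rpow_def_of_pos hpos]
    linarith [Real.add_one_le_exp (Real.log (1 + x) * p)]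
  rw [powerUtility_of_neg_one_le hx.le]
  calc 1 - (1 + x)⁻¹ ≤ Real.log (1 + x) := Real.one_sub_inv_le_log_of_pos hpos
    _ = p⁻¹ * (1 + p * Real.log (1 + x)) - p⁻¹ := by field_simp; ring
    _ ≤ p⁻¹ * (1 + x) ^ p - p⁻¹ := by gcongr

lemma neg_inv_le_powerUtility (hp0 : 0 < p) : -p⁻¹ ≤ powerUtility p x := by
  have : 0 ≤ p⁻¹ * (max (1 + x) 0) ^ p := by positivity
  unfold powerUtility
  linarith

lemma powerUtility_nonpos (hp0 : 0 < p) (hx : x ≤ 0) : powerUtility p x ≤ 0 := by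
  have hle : (max (1 + x) 0) ^ p ≤ 1 :=
    Real.rpow_le_one (le_max_right _ _) (max_le (by linarith) zero_le_one) hp0.le
  unfold powerUtility
  linarith [mul_le_mul_of_nonneg_left hle (inv_nonneg.2 hp0.le)]

lemma abs_powerUtility_sub_self_le (hp0 : 0 < p) (hp1 : p ≤ 1) :
    |powerUtility p x - x| ≤ 4 / p * x ^ 2 := by
  have hpinv : 1 ≤ p⁻¹ := (one_le_inv₀ hp0).2 hp1
  rw [div_eq_mul_inv]
  rcases le_or_gt (-(1 / 2)) x with hx | hx
  · have hpos : 0 < 1 + x := by linarith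
    have hinv : (1 + x)⁻¹ ≤ 2 := by
      rw [inv_le_comm₀ hpos two_pos]
      linarith
    have hupper : powerUtility p x ≤ x := powerUtility_le_self hp0 hp1 (by linarith)
    have hlower := one_sub_inv_le_powerUtility hp0 (by linarith : -1 < x)
    rw [abs_sub_comm, abs_of_nonneg (by linarith)]
    calc x - powerUtility p x ≤ x - (1 - (1 + x)⁻¹) := by gcongr
      _ = (1 + x)⁻¹ * x ^ 2 := by field_simp; ring
      _ ≤ 4 * p⁻¹ * x ^ 2 := by gcongr; linarith
  · have hlower : -p⁻¹ ≤ powerUtility p x := neg_inv_le_powerUtility hp0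
    have hupper : powerUtility p x ≤ 0 := powerUtility_nonpos hp0 (by linarith)
    have hneg : -x ≤ p⁻¹ * (4 * x ^ 2) := by
      calc -x ≤ 1 * (4 * x ^ 2) := by nlinarith
        _ ≤ p⁻¹ * (4 * x ^ 2) := by gcongr
    have hinv : p⁻¹ ≤ p⁻¹ * (4 * x ^ 2) := le_mul_of_one_le_right (by positivity) (by nlinarith)
    rw [abs_le]
    constructor <;> linarith

lemma abs_powerUtility_le (hp0 : 0 < p) (hp1 : p ≤ 1) :
    |powerUtility p x| ≤ p⁻¹ * |x| ^ p := by
  have hwealth : |max (1 + x) 0 - 1| ≤ |x| := by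
    simpa using abs_max_sub_max_le_abs (1 + x) 1 0
  calc |powerUtility p x| = p⁻¹ * |(max (1 + x) 0) ^ p - 1 ^ p| := by
        rw [powerUtility, ← mul_sub_one, abs_mul, abs_of_pos (inv_pos.2 hp0),
          Real.one_rpow]
    _ ≤ p⁻¹ * |max (1 + x) 0 - 1| ^ p := by
        gcongr
        exact abs_rpow_sub_rpow_le (le_max_right _ _) zero_le_one hp0.le hp1
    _ ≤ p⁻¹ * |x| ^ p := by gcongr

end PowerUtility

section LevyMeasure

variable {E : Type*} [NormedAddCommGroup E] [MeasurableSpace E] {p : ℝ} {F : Measure E}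

/-- The moment conditions on the jump measure: the integrability of `min ‖u‖² 1` that defines a
Lévy measure, and the condition `(A_F)` on large jumps. -/
structure HasLevyMoments (p : ℝ) (F : Measure E) : Prop where
  integrable_min_sq : Integrable (fun u : E => min (‖u‖ ^ 2) 1) F
  integrableOn_rpow : IntegrableOn (fun u : E => ‖u‖ ^ p) {u | 1 < ‖u‖} F

variable [OpensMeasurableSpace E]

lemma hasLevyMoments_of_lintegral_ne_top
    (hsq : ∫⁻ u, ENNReal.ofReal (min (‖u‖ ^ 2) 1) ∂F ≠ ⊤)
    (hrpow : ∫⁻ u in {u : E | 1 < ‖u‖}, ENNReal.ofReal (‖u‖ ^ p) ∂F ≠ ⊤) :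
    HasLevyMoments p F where
  integrable_min_sq := (lintegral_ofReal_ne_top_iff_integrable
    ((measurable_norm.pow_const 2).min measurable_const).aestronglyMeasurable
    (.of_forall fun u => le_min (sq_nonneg ‖u‖) zero_le_one)).1 hsq
  integrableOn_rpow := (lintegral_ofReal_ne_top_iff_integrable
    (measurable_norm.pow_const p).aestronglyMeasurable
    (.of_forall fun u => Real.rpow_nonneg (norm_nonneg u) p)).1 hrpow

/-- A function of the jump `u` that dominates the jump integrand of `Φ` at `u` for all portfolios of
norm at most `M`. -/
noncomputable def jumpGainBound (p M : ℝ) (u : E) : ℝ :=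
  4 / p * M ^ 2 * min (‖u‖ ^ 2) 1 +
    p⁻¹ * M ^ p * Set.indicator {u : E | 1 < ‖u‖} (fun u => ‖u‖ ^ p) u

lemma integrable_jumpGainBound (hF : HasLevyMoments p F) (M : ℝ) :
    Integrable (jumpGainBound p M) F := by
  have hlarge : MeasurableSet {u : E | 1 < ‖u‖} := measurableSet_lt measurable_const measurable_norm
  exact (hF.integrable_min_sq.const_mul _).add
    ((hF.integrableOn_rpow.integrable_indicator hlarge).const_mul _)

end LevyMeasure

section JumpGain

variable {E : Type*} [NormedAddCommGroup E] [InnerProductSpace ℝ E] {p M : ℝ} {π u x y : E}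

/-- The integrand of the jump part of `Φ`: the utility gain of the portfolio `π` at a jump `u`,
compensated by its linear part when `‖u‖ ≤ 1`. -/
noncomputable def jumpGain (p : ℝ) (π u : E) : ℝ :=
  powerUtility p ⟪π, u⟫ - Set.indicator {u : E | ‖u‖ ≤ 1} (fun u => ⟪π, u⟫) u

lemma jumpGain_of_norm_le_one (hu : ‖u‖ ≤ 1) :
    jumpGain p π u = powerUtility p ⟪π, u⟫ - ⟪π, u⟫ := by
  rw [jumpGain, Set.indicator_of_mem (by exact hu)]

lemma jumpGain_of_one_lt_norm (hu : 1 < ‖u‖) :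
    jumpGain p π u = powerUtility p ⟪π, u⟫ := by
  rw [jumpGain, Set.indicator_of_notMem (by simpa using hu), sub_zero]

lemma jumpGain_eq_sub_inner (π u : E) :
    jumpGain p π u = powerUtility p ⟪π, u⟫ - ⟪π, Set.indicator {u : E | ‖u‖ ≤ 1} id u⟫ := by
  by_cases hu : ‖u‖ ≤ 1 <;> simp [jumpGain, Set.indicator, hu]

lemma continuous_jumpGain_left (hp0 : 0 < p) (u : E) : Continuous fun π => jumpGain p π u := by
  simp only [jumpGain_eq_sub_inner]
  exact ((continuous_powerUtility hp0).comp (by fun_prop)).sub (by fun_prop)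

lemma two_mul_jumpGain_midpoint_sub (x y u : E) :
    2 * jumpGain p (midpoint ℝ x y) u - (jumpGain p x u + jumpGain p y u) =
      2 * powerUtility p (midpoint ℝ ⟪x, u⟫ ⟪y, u⟫) -
        (powerUtility p ⟪x, u⟫ + powerUtility p ⟪y, u⟫) := by
  simp only [jumpGain_eq_sub_inner, inner_midpoint_left]
  linear_combination -two_mul_midpoint ⟪x, Set.indicator {u : E | ‖u‖ ≤ 1} id u⟫
    ⟪y, Set.indicator {u : E | ‖u‖ ≤ 1} id u⟫

lemma jumpGain_add_le_two_mul_midpoint (hp0 : 0 < p) (hp1 : p < 1)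
    (hx : -1 ≤ ⟪x, u⟫) (hy : -1 ≤ ⟪y, u⟫) :
    jumpGain p x u + jumpGain p y u ≤ 2 * jumpGain p (midpoint ℝ x y) u := by
  have hconcave := concaveOn_add_le_two_mul_midpoint
    (strictConcaveOn_powerUtility hp0 hp1).concaveOn (Set.mem_Ici.2 hx) (Set.mem_Ici.2 hy)
  linarith [two_mul_jumpGain_midpoint_sub (p := p) x y u]

lemma inner_eq_of_jumpGain_add_eq_two_mul_midpoint (hp0 : 0 < p) (hp1 : p < 1)
    (hx : -1 ≤ ⟪x, u⟫) (hy : -1 ≤ ⟪y, u⟫)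
    (h : jumpGain p x u + jumpGain p y u = 2 * jumpGain p (midpoint ℝ x y) u) :
    ⟪x, u⟫ = ⟪y, u⟫ := by
  by_contra hne
  have hstrict := strictConcaveOn_add_lt_two_mul_midpoint
    (strictConcaveOn_powerUtility hp0 hp1) (Set.mem_Ici.2 hx) (Set.mem_Ici.2 hy) hne
  linarith [two_mul_jumpGain_midpoint_sub (p := p) x y u]

lemma norm_jumpGain_le (hp0 : 0 < p) (hp1 : p ≤ 1) (hπ : ‖π‖ ≤ M) (u : E) :
    ‖jumpGain p π u‖ ≤ jumpGainBound p M u := by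
  have hM : 0 ≤ M := (norm_nonneg π).trans hπ
  have hinner : |⟪π, u⟫| ≤ M * ‖u‖ := (abs_real_inner_le_norm π u).trans (by gcongr)
  rw [Real.norm_eq_abs, jumpGainBound]
  rcases le_or_gt ‖u‖ 1 with hu | hu
  · rw [jumpGain_of_norm_le_one hu, Set.indicator_of_notMem (by simpa using hu), mul_zero,
      add_zero, min_eq_left (pow_le_one₀ (norm_nonneg u) hu)]
    calc |powerUtility p ⟪π, u⟫ - ⟪π, u⟫| ≤ 4 / p * |⟪π, u⟫| ^ 2 := by
          rw [sq_abs]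
          exact abs_powerUtility_sub_self_le hp0 hp1
      _ ≤ 4 / p * (M * ‖u‖) ^ 2 := by gcongr
      _ = 4 / p * M ^ 2 * ‖u‖ ^ 2 := by ring
  · rw [jumpGain_of_one_lt_norm hu, Set.indicator_of_mem (by exact hu)]
    calc |powerUtility p ⟪π, u⟫| ≤ p⁻¹ * |⟪π, u⟫| ^ p := abs_powerUtility_le hp0 hp1
      _ ≤ p⁻¹ * (M * ‖u‖) ^ p := by gcongr
      _ = p⁻¹ * M ^ p * ‖u‖ ^ p := by rw [Real.mul_rpow hM (norm_nonneg u), mul_assoc]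
      _ ≤ 4 / p * M ^ 2 * min (‖u‖ ^ 2) 1 + p⁻¹ * M ^ p * ‖u‖ ^ p :=
          le_add_of_nonneg_left (by positivity)

end JumpGain

section BudgetSet

variable {E : Type*} [NormedAddCommGroup E] [InnerProductSpace ℝ E] [MeasurableSpace E]
  {F : Measure E} {π : E}

/-- The budget-constraint set `C₀`: the portfolios under which almost no jump makes wealth
negative. -/
def budgetSet (F : Measure E) : Set E :=
  {π | F {u : E | 1 + ⟪π, u⟫ < 0} = 0}

lemma mem_budgetSet_iff_ae : π ∈ budgetSet F ↔ ∀ᵐ u ∂F, -1 ≤ ⟪π, u⟫ := by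
  simp only [ae_iff, not_le, lt_neg_iff_add_neg', budgetSet, Set.mem_ofPred_eq]

lemma zero_mem_budgetSet : (0 : E) ∈ budgetSet F :=
  mem_budgetSet_iff_ae.2 <| .of_forall fun u => by simp

lemma convex_budgetSet (F : Measure E) : Convex ℝ (budgetSet F) := by
  intro x hx y hy s t hs ht hst
  rw [mem_budgetSet_iff_ae] at *
  filter_upwards [hx, hy] with u hxu hyu
  rw [inner_add_left, real_inner_smul_left, real_inner_smul_left]
  exact convex_Ici (-1 : ℝ) hxu hyu hs ht hst

lemma isClosed_budgetSet (F : Measure E) : IsClosed (budgetSet F) := by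
  refine IsSeqClosed.isClosed fun πs π hπs hlim => ?_
  simp only [mem_budgetSet_iff_ae] at *
  filter_upwards [ae_all_iff.2 hπs] with u hu
  exact ge_of_tendsto' (hlim.inner tendsto_const_nhds) hu

end BudgetSet

section JumpIntegral

variable {E : Type*} [NormedAddCommGroup E] [InnerProductSpace ℝ E] [MeasurableSpace E]
  {p : ℝ} {F : Measure E} {x y : E}

/-- The jump part of the objective `Φ`. -/
noncomputable def jumpIntegral (p : ℝ) (F : Measure E) (π : E) : ℝ :=
  ∫ u, jumpGain p π u ∂F

lemma jumpIntegral_congr_ae (h : ∀ᵐ u ∂F, ⟪x, u⟫ = ⟪y, u⟫) :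
    jumpIntegral p F x = jumpIntegral p F y := by
  refine integral_congr_ae ?_
  filter_upwards [h] with u hu
  simp only [jumpGain, Set.indicator, hu]

lemma ae_jumpGain_add_le_two_mul_midpoint (hp0 : 0 < p) (hp1 : p < 1)
    (hx : x ∈ budgetSet F) (hy : y ∈ budgetSet F) :
    ∀ᵐ u ∂F, jumpGain p x u + jumpGain p y u ≤ 2 * jumpGain p (midpoint ℝ x y) u := by
  filter_upwards [mem_budgetSet_iff_ae.1 hx, mem_budgetSet_iff_ae.1 hy] with u hxu hyu
  exact jumpGain_add_le_two_mul_midpoint hp0 hp1 hxu hyu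

variable [OpensMeasurableSpace E]

lemma measurable_jumpGain (hp0 : 0 < p) (π : E) : Measurable (jumpGain p π) := by
  have hinner : Measurable fun u : E => ⟪π, u⟫ :=
    (continuous_const.inner continuous_id).measurable
  exact ((continuous_powerUtility hp0).measurable.comp hinner).sub
    (hinner.indicator (measurableSet_le measurable_norm measurable_const))

lemma integrable_jumpGain (hp0 : 0 < p) (hp1 : p ≤ 1) (hF : HasLevyMoments p F) (π : E) :
    Integrable (jumpGain p π) F :=
  (integrable_jumpGainBound hF ‖π‖).mono'
    (measurable_jumpGain hp0 π).aestronglyMeasurable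
    (.of_forall (norm_jumpGain_le hp0 hp1 le_rfl))

lemma continuous_jumpIntegral (hp0 : 0 < p) (hp1 : p ≤ 1) (hF : HasLevyMoments p F) :
    Continuous (jumpIntegral p F) := by
  refine continuous_iff_continuousAt.2 fun π₀ => ?_
  have hbounded : ∀ᶠ π in nhds π₀, ‖π‖ < ‖π₀‖ + 1 :=
    continuous_norm.continuousAt.eventually_lt_const (lt_add_one _)
  exact continuousAt_of_dominated
    (.of_forall fun π => (measurable_jumpGain hp0 π).aestronglyMeasurable)
    (hbounded.mono fun π hπ => .of_forall (norm_jumpGain_le hp0 hp1 hπ.le))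
    (integrable_jumpGainBound hF _)
    (.of_forall fun u => (continuous_jumpGain_left hp0 u).continuousAt)

lemma jumpIntegral_add_le_two_mul_midpoint (hp0 : 0 < p) (hp1 : p < 1)
    (hF : HasLevyMoments p F) (hx : x ∈ budgetSet F) (hy : y ∈ budgetSet F) :
    jumpIntegral p F x + jumpIntegral p F y ≤ 2 * jumpIntegral p F (midpoint ℝ x y) := by
  have hint := integrable_jumpGain hp0 hp1.le hF
  simp only [jumpIntegral]
  rw [← integral_add (hint x) (hint y), ← integral_const_mul]
  exact integral_mono_ae ((hint x).add (hint y)) ((hint _).const_mul 2)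
    (ae_jumpGain_add_le_two_mul_midpoint hp0 hp1 hx hy)

lemma ae_inner_eq_of_jumpIntegral_add_eq_two_mul_midpoint (hp0 : 0 < p) (hp1 : p < 1)
    (hF : HasLevyMoments p F) (hx : x ∈ budgetSet F) (hy : y ∈ budgetSet F)
    (h : jumpIntegral p F x + jumpIntegral p F y = 2 * jumpIntegral p F (midpoint ℝ x y)) :
    ∀ᵐ u ∂F, ⟪x, u⟫ = ⟪y, u⟫ := by
  have hint := integrable_jumpGain hp0 hp1.le hF
  simp only [jumpIntegral] at h
  rw [← integral_add (hint x) (hint y), ← integral_const_mul] at h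
  have hae := (integral_eq_iff_of_ae_le ((hint x).add (hint y)) ((hint _).const_mul 2)
    (ae_jumpGain_add_le_two_mul_midpoint hp0 hp1 hx hy)).1 h
  filter_upwards [mem_budgetSet_iff_ae.1 hx, mem_budgetSet_iff_ae.1 hy, hae] with u hxu hyu hu
  exact inner_eq_of_jumpGain_add_eq_two_mul_midpoint hp0 hp1 hxu hyu hu

end JumpIntegral

section Objective

variable {E : Type*} [NormedAddCommGroup E] [InnerProductSpace ℝ E] [MeasurableSpace E]
  {p : ℝ} {F : Measure E} {x y : E}

/-- The null-investment set `N`: the directions without drift, diffusion or jumps. -/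
def nullInvestments (F : Measure E) (b : E) (c : E →L[ℝ] E) : Set E :=
  {π | c π = 0 ∧ F {u : E | ⟪π, u⟫ ≠ 0} = 0 ∧ ⟪π, b⟫ = 0}

/-- The objective `Φ` on an arbitrary real inner product space; on `EuclideanSpace ℝ (Fin n)` it
unfolds to `PhiObj`. -/
noncomputable def portfolioObjective (p : ℝ) (F : Measure E) (b : E) (c : E →L[ℝ] E) (π : E) : ℝ :=
  ⟪π, b⟫ + ((p - 1) / 2) * ⟪π, c π⟫ + jumpIntegral p F π

lemma two_mul_portfolioObjective_midpoint_sub (b : E) (c : E →L[ℝ] E) (x y : E) :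
    2 * portfolioObjective p F b c (midpoint ℝ x y) -
        (portfolioObjective p F b c x + portfolioObjective p F b c y) =
      (1 - p) / 4 * ⟪x - y, c (x - y)⟫ +
        (2 * jumpIntegral p F (midpoint ℝ x y) - (jumpIntegral p F x + jumpIntegral p F y)) := by
  have hdrift : 2 * ⟪midpoint ℝ x y, b⟫ = ⟪x, b⟫ + ⟪y, b⟫ := by
    rw [inner_midpoint_left, two_mul_midpoint]
  have hdiffusion := inner_map_self_add_inner_map_self (c : E →ₗ[ℝ] E) x y
  simp only [ContinuousLinearMap.coe_coe] at hdiffusion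
  unfold portfolioObjective
  linear_combination hdrift + (1 - p) / 2 * hdiffusion

lemma inner_eq_of_portfolioObjective_eq {b : E} {c : E →L[ℝ] E}
    (hc : (c : E →ₗ[ℝ] E).IsSymmetric)
    (hΦ : portfolioObjective p F b c x = portfolioObjective p F b c y)
    (hcxy : c (x - y) = 0) (hjump : ∀ᵐ u ∂F, ⟪x, u⟫ = ⟪y, u⟫) : ⟪x, b⟫ = ⟪y, b⟫ := by
  have hc_eq : c x = c y := by rwa [map_sub, sub_eq_zero] at hcxy
  have hquad : ⟪x, c x⟫ = ⟪y, c y⟫ :=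
    calc ⟪x, c x⟫ = ⟪x, c y⟫ := by rw [hc_eq]
      _ = ⟪c x, y⟫ := (hc x y).symm
      _ = ⟪c y, y⟫ := by rw [hc_eq]
      _ = ⟪y, c y⟫ := hc y y
  unfold portfolioObjective at hΦ
  rw [hquad, jumpIntegral_congr_ae hjump] at hΦ
  linarith

variable [OpensMeasurableSpace E]

lemma continuous_portfolioObjective (hp0 : 0 < p) (hp1 : p ≤ 1)
    (hF : HasLevyMoments p F) (b : E) (c : E →L[ℝ] E) :
    Continuous (portfolioObjective p F b c) := by
  have := continuous_jumpIntegral hp0 hp1 hF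
  unfold portfolioObjective
  fun_prop

lemma sub_mem_nullInvestments_of_isMaxOn (hp0 : 0 < p) (hp1 : p < 1) (hF : HasLevyMoments p F)
    {b : E} {c : E →L[ℝ] E} (hc : c.IsPositive) {S : Set E} (hS : Convex ℝ S)
    (hSF : S ⊆ budgetSet F) (hx : x ∈ S) (hy : y ∈ S)
    (hxmax : IsMaxOn (portfolioObjective p F b c) S x)
    (hymax : IsMaxOn (portfolioObjective p F b c) S y) :
    x - y ∈ nullInvestments F b c := by
  have hΦ : portfolioObjective p F b c x = portfolioObjective p F b c y :=
    le_antisymm (hymax hx) (hxmax hy)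
  have hmid : portfolioObjective p F b c (midpoint ℝ x y) ≤ portfolioObjective p F b c x :=
    hxmax (hS.midpoint_mem hx hy)
  have hgap := two_mul_portfolioObjective_midpoint_sub (p := p) (F := F) b c x y
  have hquad_gap : 0 ≤ (1 - p) / 4 * ⟪x - y, c (x - y)⟫ :=
    mul_nonneg (by linarith) (hc.inner_nonneg_right _)
  have hjump_gap := jumpIntegral_add_le_two_mul_midpoint hp0 hp1 hF (hSF hx) (hSF hy)
  have hquad : ⟪x - y, c (x - y)⟫ = 0 :=
    (mul_eq_zero_iff_left (by linarith : (1 - p) / 4 ≠ 0)).1 (by linarith)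
  have hc_zero : c (x - y) = 0 := map_eq_zero_of_inner_map_self_eq_zero hc.toLinearMap hquad
  have hjump : ∀ᵐ u ∂F, ⟪x, u⟫ = ⟪y, u⟫ :=
    ae_inner_eq_of_jumpIntegral_add_eq_two_mul_midpoint hp0 hp1 hF (hSF hx) (hSF hy)
      (by linarith)
  refine ⟨hc_zero, ae_iff.1 ?_, ?_⟩
  · simpa only [inner_sub_left, sub_eq_zero] using hjump
  · rw [inner_sub_left, sub_eq_zero]
    exact inner_eq_of_portfolioObjective_eq hc.isSymmetric hΦ hc_zero hjump

theorem Phi_attains_max_and_maximizers_unique_mod_N_general (hp0 : 0 < p) (hp1 : p < 1)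
    (hF : HasLevyMoments p F) (b : E) {c : E →L[ℝ] E} (hc : c.IsPositive) {C : Set E}
    (hCcompact : IsCompact C) (hCconvex : Convex ℝ C) (hne : (C ∩ budgetSet F).Nonempty) :
    (∃ π ∈ C ∩ budgetSet F, IsMaxOn (portfolioObjective p F b c) (C ∩ budgetSet F) π) ∧
      ∀ π₁ ∈ C ∩ budgetSet F, ∀ π₂ ∈ C ∩ budgetSet F,
        IsMaxOn (portfolioObjective p F b c) (C ∩ budgetSet F) π₁ →
        IsMaxOn (portfolioObjective p F b c) (C ∩ budgetSet F) π₂ →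
        π₁ - π₂ ∈ nullInvestments F b c :=
  ⟨(hCcompact.inter_right (isClosed_budgetSet F)).exists_isMaxOn hne
      (continuous_portfolioObjective hp0 hp1.le hF b c).continuousOn,
    fun _ h₁ _ h₂ => sub_mem_nullInvestments_of_isMaxOn hp0 hp1 hF hc
      (hCconvex.inter (convex_budgetSet F)) Set.inter_subset_right h₁ h₂⟩

end Objective

/-- Let `p ∈ (0,1)`, `F` a Lévy measure satisfying `(A_F)`, `b ∈ ℝⁿ`, `c`
symmetric positive semidefinite, and `C` a compact convex set with `0 ∈ C`. Then
(a) `Φ` attains its maximum over `C ∩ C₀`, and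
(b) any two maximizers of `Φ` over `C ∩ C₀` differ by an element of the null-investment
set `N`. -/
theorem Phi_attains_max_and_maximizers_unique_mod_N
    (n : ℕ) (hn : 1 ≤ n) (p : ℝ) (hp0 : 0 < p) (hp1 : p < 1)
    (F : Measure (EuclideanSpace ℝ (Fin n)))
    (hF0 : F {(0 : EuclideanSpace ℝ (Fin n))} = 0)
    (hFlevy : ∫⁻ u, ENNReal.ofReal (min (‖u‖ ^ (2 : ℕ)) 1) ∂F ≠ ⊤)
    (hAF : ∫⁻ u in {u : EuclideanSpace ℝ (Fin n) | 1 < ‖u‖}, ENNReal.ofReal (‖u‖ ^ p) ∂F ≠ ⊤)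
    (b : EuclideanSpace ℝ (Fin n))
    (c : EuclideanSpace ℝ (Fin n) →ₗ[ℝ] EuclideanSpace ℝ (Fin n))
    (hcsymm : ∀ x y : EuclideanSpace ℝ (Fin n), ⟪c x, y⟫ = ⟪x, c y⟫)
    (hcpsd : ∀ x : EuclideanSpace ℝ (Fin n), 0 ≤ ⟪x, c x⟫)
    (C : Set (EuclideanSpace ℝ (Fin n)))
    (hCcompact : IsCompact C) (hCco : Convex ℝ C)
    (h0C : (0 : EuclideanSpace ℝ (Fin n)) ∈ C) :
    (∃ πs : EuclideanSpace ℝ (Fin n), πs ∈ C ∧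
      F {u : EuclideanSpace ℝ (Fin n) | 1 + ⟪πs, u⟫ < 0} = 0 ∧
      ∀ π ∈ C, F {u : EuclideanSpace ℝ (Fin n) | 1 + ⟪π, u⟫ < 0} = 0 →
        PhiObj n p F b c π ≤ PhiObj n p F b c πs) ∧
    (∀ π₁ π₂ : EuclideanSpace ℝ (Fin n),
      π₁ ∈ C → F {u : EuclideanSpace ℝ (Fin n) | 1 + ⟪π₁, u⟫ < 0} = 0 →
      π₂ ∈ C → F {u : EuclideanSpace ℝ (Fin n) | 1 + ⟪π₂, u⟫ < 0} = 0 →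
      (∀ π ∈ C, F {u : EuclideanSpace ℝ (Fin n) | 1 + ⟪π, u⟫ < 0} = 0 →
        PhiObj n p F b c π ≤ PhiObj n p F b c π₁) →
      (∀ π ∈ C, F {u : EuclideanSpace ℝ (Fin n) | 1 + ⟪π, u⟫ < 0} = 0 →
        PhiObj n p F b c π ≤ PhiObj n p F b c π₂) →
      (c (π₁ - π₂) = 0 ∧
        F {u : EuclideanSpace ℝ (Fin n) | ⟪π₁ - π₂, u⟫ ≠ 0} = 0 ∧
        ⟪π₁ - π₂, b⟫ = 0)) := by
  have hc : (LinearMap.toContinuousLinearMap c).IsPositive :=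
    ⟨hcsymm, fun x => (hcpsd x).trans_eq (hcsymm x x).symm⟩
  obtain ⟨⟨πs, hπs, hmax⟩, hunique⟩ := Phi_attains_max_and_maximizers_unique_mod_N_general hp0 hp1
    (hasLevyMoments_of_lintegral_ne_top hFlevy hAF) b hc hCcompact hCco
    ⟨0, h0C, zero_mem_budgetSet⟩
  exact ⟨⟨πs, hπs.1, hπs.2, fun π hC hC₀ => hmax ⟨hC, hC₀⟩⟩,
    fun π₁ π₂ h₁C h₁C₀ h₂C h₂C₀ h₁max h₂max => hunique π₁ ⟨h₁C, h₁C₀⟩ π₂ ⟨h₂C, h₂C₀⟩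
      (fun π hπ => h₁max π hπ.1 hπ.2) (fun π hπ => h₂max π hπ.1 hπ.2)⟩
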